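/- Let the edges of a finite complete graph be coloured red and blue. Then the vertex set can be partitioned into the vertex set of a red path and the vertex set of a blue path; that is, there exist a vertex-disjoint red path and blue path whose vertex sets together cover all vertices. -/

import Mathlib

open SimpleGraph Set

/- Convention: colour `true` is red, colour `false` is blue. -/

/-- The subgraph of `G` consisting of the edges of colour `b`. -/
def monoSubgraph {V : Type*} (G : SimpleGraph V) (c : Sym2 V → Bool) (b : Bool) :
    SimpleGraph V :=
  SimpleGraph.fromEdgeSet {e | e ∈ G.edgeSet ∧ c e = b}

/-- `S` is the vertex set of a (possibly empty, possibly trivial) path of `G`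
all of whose edges have colour `b`. -/
def IsMonoPathSet {V : Type*} (G : SimpleGraph V) (c : Sym2 V → Bool) (b : Bool)
    (S : Set V) : Prop :=
  S = ∅ ∨ ∃ (u v : V) (p : G.Walk u v), p.IsPath ∧ (∀ e ∈ p.edges, c e = b) ∧
    S = {x | x ∈ p.support}

/-- `S` is the vertex set of a (possibly degenerate: empty, single vertex or single edge)
cycle of `G` all of whose edges have colour `b`. -/
def IsMonoCycleSet {V : Type*} (G : SimpleGraph V) (c : Sym2 V → Bool) (b : Bool)
    (S : Set V) : Prop :=
  S = ∅ ∨ (∃ v, S = {v}) ∨ (∃ u v, G.Adj u v ∧ c s(u, v) = b ∧ S = {u, v}) ∨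
    ∃ (v : V) (p : G.Walk v v), p.IsCycle ∧ (∀ e ∈ p.edges, c e = b) ∧
      S = {x | x ∈ p.support}

/-- `M` is a matching of `G` in colour `b` which is connected, i.e. all its edges lie in one
connected component of the subgraph formed by the edges of colour `b`. -/
def IsConnMatching {V : Type*} (G : SimpleGraph V) (c : Sym2 V → Bool) (b : Bool)
    (M : Set (Sym2 V)) : Prop :=
  (∀ e ∈ M, e ∈ G.edgeSet ∧ c e = b) ∧
  (∀ e ∈ M, ∀ f ∈ M, e ≠ f → ∀ x, x ∈ e → x ∉ f) ∧
  (∀ e ∈ M, ∀ f ∈ M, ∀ x, x ∈ e → ∀ y, y ∈ f → (monoSubgraph G c b).Reachable x y)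

/-- The set of vertices covered by a set of edges. -/
def matchSupport {V : Type*} (M : Set (Sym2 V)) : Set V := {x | ∃ e ∈ M, x ∈ e}

/-- The colouring `c` of the (bipartite, with classes `U` and `W`) graph `G` is a split
colouring: `U = A ∪ B`, `W = C ∪ D`, the edges between `A,C` and between `B,D` are blue
(`false`), and the edges between `A,D` and between `B,C` are red (`true`). -/
def IsSplitColouring {V : Type*} (G : SimpleGraph V) (c : Sym2 V → Bool)
    (U W : Set V) : Prop :=
  ∃ A B C D : Set V,
    A ∪ B = U ∧ Disjoint A B ∧ C ∪ D = W ∧ Disjoint C D ∧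
    (∀ u v, G.Adj u v →
      (((u ∈ A ∧ v ∈ C) ∨ (u ∈ C ∧ v ∈ A) ∨ (u ∈ B ∧ v ∈ D) ∨ (u ∈ D ∧ v ∈ B)) →
        c s(u, v) = false)) ∧
    (∀ u v, G.Adj u v →
      (((u ∈ A ∧ v ∈ D) ∨ (u ∈ D ∧ v ∈ A) ∨ (u ∈ B ∧ v ∈ C) ∨ (u ∈ C ∧ v ∈ B)) →
        c s(u, v) = true))

/-- The colouring `c` of `G` is `δ`-close to a split colouring: one can delete at most
`δ|E(G)|` edges so that the remaining graph is bipartite and the colouring on it is a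
split colouring. -/
def CloseToSplit {V : Type*} (G : SimpleGraph V) (c : Sym2 V → Bool) (δ : ℝ) : Prop :=
  ∃ F : Set (Sym2 V), F ⊆ G.edgeSet ∧ (F.ncard : ℝ) ≤ δ * (G.edgeSet.ncard : ℝ) ∧
    ∃ U W : Set V, U ∪ W = Set.univ ∧ Disjoint U W ∧
      (∀ u v, (G.deleteEdges F).Adj u v → ((u ∈ U ∧ v ∈ W) ∨ (u ∈ W ∧ v ∈ U))) ∧
      IsSplitColouring (G.deleteEdges F) c U W

/-!
Add the vertices one at a time, keeping a red path and a blue path which partition the vertices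
added so far. Let `x` and `y` be the first vertices of the two paths and `v` the new vertex. If
`vx` is red or `vy` is blue, put `v` in front of `x` or of `y`. Otherwise `vx` is blue and `vy` is
red. If `xy` is red, move `y` to the red path, which now starts `v, y, x`; if `xy` is blue, move
`x` to the blue path, which now starts `v, x, y`.
-/

section TwoRelations

variable {α : Type*} {R S : α → α → Prop}

theorem exists_isChain_append_perm_cons [Std.Symm R] {v : α} {r t : List α}
    (hr : r.IsChain R) (ht : t.IsChain S) (hv : ∀ a ∈ r ++ t, R v a ∨ S v a)
    (hrt : ∀ x ∈ r, ∀ y ∈ t, R x y ∨ S x y) :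
    ∃ r' t' : List α, (r' ++ t').Perm (v :: (r ++ t)) ∧ r'.IsChain R ∧ t'.IsChain S := by
  rcases r with _ | ⟨x, r⟩
  · exact ⟨[v], t, .refl _, .singleton v, ht⟩
  rcases t with _ | ⟨y, t⟩
  · exact ⟨x :: r, [v], by simpa using List.perm_append_singleton v (x :: r), hr, .singleton v⟩
  rcases hv x (by simp) with hvx | hvx
  · exact ⟨v :: x :: r, y :: t, .refl _, hr.cons_cons hvx, ht⟩
  rcases (hv y (by simp)).symm with hvy | hvy
  · exact ⟨x :: r, v :: y :: t, List.perm_middle, hr, ht.cons_cons hvy⟩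
  rcases hrt x (by simp) y (by simp) with hxy | hxy
  · exact ⟨v :: y :: x :: r, t, List.perm_middle.symm.cons v,
      (hr.cons_cons (symm hxy)).cons_cons hvy, ht.tail⟩
  · exact ⟨r, v :: x :: y :: t, List.perm_middle.trans (List.perm_middle.cons v),
      hr.tail, (ht.cons_cons hxy).cons_cons hvx⟩

theorem exists_isChain_append_perm [Std.Symm R] [Std.Symm S] {l : List α}
    (hl : l.Pairwise fun a b => R a b ∨ S a b) :
    ∃ r t : List α, (r ++ t).Perm l ∧ r.IsChain R ∧ t.IsChain S := by
  induction l with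
  | nil => exact ⟨[], [], .refl _, .nil, .nil⟩
  | cons v l ih =>
    obtain ⟨hv, hl⟩ := List.pairwise_cons.1 hl
    obtain ⟨r, t, hperm, hr, ht⟩ := ih hl
    have hrt : (r ++ t).Pairwise fun a b => R a b ∨ S a b :=
      hl.perm hperm.symm (Or.imp symm symm)
    obtain ⟨r', t', hperm', hr', ht'⟩ := exists_isChain_append_perm_cons hr ht
      (fun a ha => hv a (hperm.mem_iff.1 ha)) (List.pairwise_append.1 hrt).2.2
    exact ⟨r', t', hperm'.trans (hperm.cons v), hr', ht'⟩

end TwoRelations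

section EdgeColouring

variable {V : Type*} {G : SimpleGraph V} {c : Sym2 V → Bool} {b : Bool}

theorem monoSubgraph_adj {u v : V} :
    (monoSubgraph G c b).Adj u v ↔ G.Adj u v ∧ c s(u, v) = b := by
  simp only [monoSubgraph, fromEdgeSet_adj, Set.mem_ofPred_eq, mem_edgeSet]
  exact ⟨And.left, fun h => ⟨h, h.1.ne⟩⟩

theorem monoSubgraph_le : monoSubgraph G c b ≤ G :=
  fun _ _ h => (monoSubgraph_adj.1 h).1

theorem colour_eq_of_mem_edgeSet_monoSubgraph {e : Sym2 V}
    (he : e ∈ (monoSubgraph G c b).edgeSet) : c e = b := by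
  induction e with
  | _ u v => exact (monoSubgraph_adj.1 he).2

theorem monoSubgraph_adj_true_or_false {u v : V} (h : G.Adj u v) :
    (monoSubgraph G c true).Adj u v ∨ (monoSubgraph G c false).Adj u v := by
  simp only [monoSubgraph_adj, h, true_and, Bool.eq_true_or_eq_false_self]

theorem isMonoPathSet_of_isChain {l : List V} (hnodup : l.Nodup)
    (hchain : l.IsChain (monoSubgraph G c b).Adj) : IsMonoPathSet G c b {x | x ∈ l} := by
  rcases eq_or_ne l [] with rfl | hne
  · exact .inl (by simp)
  let p := Walk.ofSupport l hne hchain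
  have hsupp : p.support = l := Walk.support_ofSupport hne hchain
  have hpath : p.IsPath := p.isPath_def.2 (hsupp.symm ▸ hnodup)
  refine .inr ⟨_, _, p.mapLe monoSubgraph_le, hpath.mapLe _, fun e he => ?_, ?_⟩
  · rw [Walk.edges_mapLe_eq_edges] at he
    exact colour_eq_of_mem_edgeSet_monoSubgraph (p.edges_subset_edgeSet he)
  · rw [Walk.support_mapLe_eq_support, hsupp]

end EdgeColouring

theorem stmt15_general {V : Type*} {G : SimpleGraph V} (c : Sym2 V → Bool) {K : Set V}
    (hfin : K.Finite) (hK : G.IsClique K) :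
    ∃ S T : Set V, IsMonoPathSet G c true S ∧ IsMonoPathSet G c false T ∧
      Disjoint S T ∧ S ∪ T = K := by
  obtain ⟨l, hl, rfl⟩ : ∃ l : List V, l.Nodup ∧ {x | x ∈ l} = K :=
    ⟨hfin.toFinset.toList, Finset.nodup_toList _, by simp⟩
  have hadj : l.Pairwise fun u v =>
      (monoSubgraph G c true).Adj u v ∨ (monoSubgraph G c false).Adj u v :=
    hl.imp_of_mem fun hu hv huv => monoSubgraph_adj_true_or_false (hK hu hv huv)
  have hsymm (b : Bool) : Std.Symm (monoSubgraph G c b).Adj := (monoSubgraph G c b).symm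
  obtain ⟨r, t, hperm, hr, ht⟩ := exists_isChain_append_perm hadj
  obtain ⟨hrn, htn, hdisj⟩ := List.nodup_append'.1 (hperm.nodup_iff.2 hl)
  refine ⟨{x | x ∈ r}, {x | x ∈ t}, isMonoPathSet_of_isChain hrn hr,
    isMonoPathSet_of_isChain htn ht, Set.disjoint_left.2 hdisj, ?_⟩
  ext x
  exact List.mem_append.symm.trans hperm.mem_iff

/-- Gerencsér–Gyárfás: the vertex set of any finite complete graph with red/blue-coloured
edges can be partitioned into the vertex set of a red path and the vertex set of a blue
path. -/
theorem stmt15 {V : Type*} [Fintype V] (c : Sym2 V → Bool) :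
    ∃ S T : Set V, IsMonoPathSet (⊤ : SimpleGraph V) c true S ∧
      IsMonoPathSet (⊤ : SimpleGraph V) c false T ∧
      Disjoint S T ∧ S ∪ T = Set.univ :=
  stmt15_general c Set.finite_univ fun _ _ _ _ h => h
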